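/- arXiv:math/0307216 — 3 statements merged into one kernel-verified Lean document; each statement's English description precedes it below -/
import Mathlib

section
/- Let α, β:(a,b)→ℝ^{2,1} be normalized isotropic curves with the same curvature function, i.e. ⟨α‴(t),α‴(t)⟩ = ⟨β‴(t),β‴(t)⟩ for all t, and suppose that for some t₀ ∈ (a,b) one has det(α′(t₀),α″(t₀),α‴(t₀)) = det(β′(t₀),β″(t₀),β‴(t₀)). Then α and β are congruent: there exist q ∈ ℝ³ and a real 3×3 matrix A with ⟨Ax,Ay⟩ = ⟨x,y⟩ for all x,y ∈ ℝ³ and det A = 1, such that β(t) = A α(t) + q for all t ∈ (a,b). -/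
/-!
The argument is the Frenet one. For a normalized isotropic curve `α`, differentiating
`⟨α′,α′⟩ = 0` and `⟨α″,α″⟩ = 1` determines every inner product of the frame `(α′,α″,α‴)` in terms
of the single function `c = ⟨α‴,α‴⟩` (`frame_relations`). The Gram matrix of the frame has
determinant `-1`, so the frame is a basis, and expanding the fourth derivative in it gives the
Frenet equation `α⁗ = -(c′/2) α′ - c α″` (`frenet_equation`).

If `F`, `F'` are the frames of `α`, `β`, the matrix `F' F⁻¹` has the polynomial expression
`F' G⁻¹ Fᵀ g`, where `G` is the common Gram matrix (`transition`). The Frenet equations make its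
derivative vanish, so it is a constant matrix `A`. It preserves the inner product since both
frames have the same Gram matrix, its determinant is `1` by the hypothesis at `t₀`, and `Aα′ = β′`
shows that `β - Aα` is constant.
-/

open Set

noncomputable section

/-- The Lorentzian inner product on `ℝ^{2,1}`:
`⟨v,w⟩ = −(v¹w³ + v³w¹) + v²w²` (components are 0-indexed). -/
def lprod (v w : Fin 3 → ℝ) : ℝ := -(v 0 * w 2 + v 2 * w 0) + v 1 * w 1

/-- A vector is future-directed if `⟨v, e₁ + e₃⟩ < 0`. -/
def futDir (v : Fin 3 → ℝ) : Prop := lprod v ![1, 0, 1] < 0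

/-- The Gram matrix of the Lorentzian inner product. -/
def gram : Matrix (Fin 3) (Fin 3) ℝ := !![0, 0, -1; 0, 1, 0; -1, 0, 0]

/-- The cross product on `ℝ^{2,1}`, determined by `⟨v × w, u⟩ = det (v, w, u)`. -/
def lcross (v w : Fin 3 → ℝ) : Fin 3 → ℝ :=
  ![-(v 0 * w 1 - v 1 * w 0), v 2 * w 0 - v 0 * w 2, -(v 1 * w 2 - v 2 * w 1)]

/-- The matrix whose columns are the three given vectors. -/
def frameMat (e₁ e₂ e₃ : Fin 3 → ℝ) : Matrix (Fin 3) (Fin 3) ℝ :=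
  (Matrix.of ![e₁, e₂, e₃]).transpose

/-- The Gram matrix of the frame `(α′,α″,α‴)` of a normalized isotropic curve with
`⟨α‴,α‴⟩ = c`. -/
def frameGram (c : ℝ) : Matrix (Fin 3) (Fin 3) ℝ := !![0, 0, -1; 0, 1, 0; -1, 0, c]

/-- The inverse of `frameGram c`. -/
def frameGramInv (c : ℝ) : Matrix (Fin 3) (Fin 3) ℝ := !![-c, 0, -1; 0, 1, 0; -1, 0, 0]

/-- The matrix `F' G⁻¹ Fᵀ g`, which carries the frame `F` to the frame `F'` when `F` has Gram
matrix `G = frameGram c`. -/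
def transition (c : ℝ) (F F' : Matrix (Fin 3) (Fin 3) ℝ) : Matrix (Fin 3) (Fin 3) ℝ :=
  F' * (frameGramInv c * (F.transpose * gram))

lemma frameGramInv_mul (c : ℝ) : frameGramInv c * frameGram c = 1 := by
  ext i j
  fin_cases i <;> fin_cases j <;>
    simp [frameGramInv, frameGram, Matrix.mul_apply, Fin.sum_univ_three]

lemma frameGram_det (c : ℝ) : (frameGram c).det = -1 := by
  simp [frameGram, Matrix.det_fin_three]

lemma lprod_comm (v w : Fin 3 → ℝ) : lprod v w = lprod w v := by
  simp only [lprod]; ring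

lemma lprod_eq_dotProduct (v w : Fin 3 → ℝ) : lprod v w = v ⬝ᵥ gram.mulVec w := by
  simp [lprod, gram, dotProduct, Matrix.mulVec, Fin.sum_univ_three]
  ring

lemma frameMat_gram {c : ℝ} {e₁ e₂ e₃ : Fin 3 → ℝ}
    (h11 : lprod e₁ e₁ = 0) (h12 : lprod e₁ e₂ = 0) (h13 : lprod e₁ e₃ = -1)
    (h22 : lprod e₂ e₂ = 1) (h23 : lprod e₂ e₃ = 0) (h33 : lprod e₃ e₃ = c) :
    (frameMat e₁ e₂ e₃).transpose * gram * frameMat e₁ e₂ e₃ = frameGram c := by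
  simp only [lprod] at *
  ext i j
  fin_cases i <;> fin_cases j <;>
    simp [frameMat, frameGram, gram, Matrix.mul_apply, Fin.sum_univ_three, Matrix.vecHead,
      Matrix.vecTail] <;>
    linarith

lemma transition_mul {c : ℝ} {F F' : Matrix (Fin 3) (Fin 3) ℝ}
    (hF : F.transpose * gram * F = frameGram c) : transition c F F' * F = F' := by
  rw [transition, Matrix.mul_assoc, Matrix.mul_assoc, hF, frameGramInv_mul, Matrix.mul_one]

lemma transition_self {c : ℝ} {F : Matrix (Fin 3) (Fin 3) ℝ}
    (hF : F.transpose * gram * F = frameGram c) : transition c F F = 1 := by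
  rw [transition, mul_eq_one_comm, Matrix.mul_assoc, hF, frameGramInv_mul]

lemma det_ne_zero_of_gram {c : ℝ} {F : Matrix (Fin 3) (Fin 3) ℝ}
    (hF : F.transpose * gram * F = frameGram c) : F.det ≠ 0 := by
  intro h
  have := congrArg Matrix.det hF
  rw [Matrix.det_mul, h, frameGram_det] at this
  norm_num at this

lemma lprod_mulVec (F : Matrix (Fin 3) (Fin 3) ℝ) (x y : Fin 3 → ℝ) :
    lprod (F.mulVec x) (F.mulVec y) = x ⬝ᵥ (F.transpose * gram * F).mulVec y := by
  rw [lprod_eq_dotProduct, ← Matrix.mulVec_mulVec, ← Matrix.mulVec_mulVec,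
    Matrix.dotProduct_mulVec x, Matrix.vecMul_transpose]

lemma transition_isometry {c : ℝ} {F F' : Matrix (Fin 3) (Fin 3) ℝ}
    (hF : F.transpose * gram * F = frameGram c)
    (hF' : F'.transpose * gram * F' = frameGram c) (x y : Fin 3 → ℝ) :
    lprod ((transition c F F').mulVec x) ((transition c F F').mulVec y) = lprod x y := by
  -- Both sides are the form `frameGram c` evaluated at the coordinates of `x`, `y` in `F`.
  have key : ∀ H : Matrix (Fin 3) (Fin 3) ℝ, H.transpose * gram * H = frameGram c →
      lprod ((transition c F H).mulVec x) ((transition c F H).mulVec y) =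
        (frameGramInv c * (F.transpose * gram)).mulVec x ⬝ᵥ
          (frameGram c).mulVec ((frameGramInv c * (F.transpose * gram)).mulVec y) := by
    intro H hH
    rw [transition, ← Matrix.mulVec_mulVec x H, ← Matrix.mulVec_mulVec y H, lprod_mulVec, hH]
  rw [key F' hF', ← key F hF, transition_self hF, Matrix.one_mulVec, Matrix.one_mulVec]

lemma transition_apply (c : ℝ) (e₁ e₂ e₃ f₁ f₂ f₃ : Fin 3 → ℝ) (i j : Fin 3) :
    transition c (frameMat e₁ e₂ e₃) (frameMat f₁ f₂ f₃) i j =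
      ∑ k, (-c * f₁ i * e₁ k - f₁ i * e₃ k + f₂ i * e₂ k - f₃ i * e₁ k) * gram k j := by
  simp [transition, frameMat, frameGramInv, Matrix.mul_apply, Fin.sum_univ_three, Matrix.vecMul,
    dotProduct]
  ring

/-- Expansion of a vector in a frame with Gram matrix `frameGram c`. -/
lemma frame_expansion {c : ℝ} {e₁ e₂ e₃ : Fin 3 → ℝ}
    (hF : (frameMat e₁ e₂ e₃).transpose * gram * frameMat e₁ e₂ e₃ = frameGram c)
    (v : Fin 3 → ℝ) (i : Fin 3) :
    v i = (-c * lprod v e₁ - lprod v e₃) * e₁ i + lprod v e₂ * e₂ i - lprod v e₁ * e₃ i := by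
  have h : (transition c (frameMat e₁ e₂ e₃) (frameMat e₁ e₂ e₃)).mulVec v = v := by
    rw [transition_self hF, Matrix.one_mulVec]
  conv_lhs => rw [← h]
  simp only [Matrix.mulVec, dotProduct, transition_apply]
  simp [lprod, gram, Fin.sum_univ_three]
  ring

lemma hasDerivAt_lprod {u v : ℝ → Fin 3 → ℝ} {u' v' : Fin 3 → ℝ} {t : ℝ}
    (hu : HasDerivAt u u' t) (hv : HasDerivAt v v' t) :
    HasDerivAt (fun s => lprod (u s) (v s)) (lprod u' (v t) + lprod (u t) v') t := by
  rw [hasDerivAt_pi] at hu hv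
  unfold lprod
  refine (((((hu 0).mul (hv 2)).add ((hu 2).mul (hv 0))).neg).add
    ((hu 1).mul (hv 1))).congr_deriv ?_
  ring

/-- Leibniz rule for an inner product that is constant on an open interval. -/
lemma lprod_leibniz_of_const {a b k : ℝ} {u v : ℝ → Fin 3 → ℝ} {u' v' : Fin 3 → ℝ}
    (h : ∀ t ∈ Ioo a b, lprod (u t) (v t) = k) {t : ℝ} (ht : t ∈ Ioo a b)
    (hu : HasDerivAt u u' t) (hv : HasDerivAt v v' t) :
    lprod u' (v t) + lprod (u t) v' = 0 := by
  refine (hasDerivAt_lprod hu hv).unique ((hasDerivAt_const t k).congr_of_eventuallyEq ?_)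
  filter_upwards [isOpen_Ioo.mem_nhds ht] with s hs using h s hs

lemma contDiffOn_deriv {a b : ℝ} {u : ℝ → Fin 3 → ℝ}
    (hu : ContDiffOn ℝ (⊤ : ℕ∞) u (Ioo a b)) : ContDiffOn ℝ (⊤ : ℕ∞) (deriv u) (Ioo a b) :=
  hu.deriv_of_isOpen isOpen_Ioo (by simp)

lemma hasDerivAt_of_contDiffOn {a b : ℝ} {u : ℝ → Fin 3 → ℝ}
    (hu : ContDiffOn ℝ (⊤ : ℕ∞) u (Ioo a b)) {t : ℝ} (ht : t ∈ Ioo a b) :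
    HasDerivAt u (deriv u t) t :=
  ((hu.differentiableOn (by simp)).differentiableAt (isOpen_Ioo.mem_nhds ht)).hasDerivAt

/-- The remaining inner products of the first four derivatives of a normalized isotropic curve,
obtained by differentiating the two defining identities. -/
lemma frame_relations {a b : ℝ} {α : ℝ → Fin 3 → ℝ}
    (hα : ContDiffOn ℝ (⊤ : ℕ∞) α (Ioo a b))
    (hnull : ∀ t ∈ Ioo a b, lprod (deriv α t) (deriv α t) = 0)
    (hnorm : ∀ t ∈ Ioo a b, lprod (deriv (deriv α) t) (deriv (deriv α) t) = 1) :
    ∀ t ∈ Ioo a b,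
      lprod (deriv α t) (deriv (deriv α) t) = 0 ∧
      lprod (deriv α t) (deriv (deriv (deriv α)) t) = -1 ∧
      lprod (deriv (deriv α) t) (deriv (deriv (deriv α)) t) = 0 ∧
      lprod (deriv (deriv (deriv (deriv α))) t) (deriv α t) = 0 ∧
      lprod (deriv (deriv (deriv (deriv α))) t) (deriv (deriv α) t) =
        -lprod (deriv (deriv (deriv α)) t) (deriv (deriv (deriv α)) t) := by
  have c1 := contDiffOn_deriv hα
  have c2 := contDiffOn_deriv c1
  have c3 := contDiffOn_deriv c2
  have h12 : ∀ t ∈ Ioo a b, lprod (deriv α t) (deriv (deriv α) t) = 0 := fun t ht => by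
    have d := hasDerivAt_of_contDiffOn c1 ht
    have := lprod_leibniz_of_const hnull ht d d
    rw [lprod_comm (deriv (deriv α) t)] at this
    linarith
  have h13 : ∀ t ∈ Ioo a b, lprod (deriv α t) (deriv (deriv (deriv α)) t) = -1 := fun t ht => by
    have := lprod_leibniz_of_const h12 ht (hasDerivAt_of_contDiffOn c1 ht)
      (hasDerivAt_of_contDiffOn c2 ht)
    linarith [hnorm t ht]
  have h23 : ∀ t ∈ Ioo a b, lprod (deriv (deriv α) t) (deriv (deriv (deriv α)) t) = 0 :=
    fun t ht => by
      have d := hasDerivAt_of_contDiffOn c2 ht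
      have := lprod_leibniz_of_const hnorm ht d d
      rw [lprod_comm (deriv (deriv (deriv α)) t)] at this
      linarith
  refine fun t ht => ⟨h12 t ht, h13 t ht, h23 t ht, ?_, ?_⟩
  · have := lprod_leibniz_of_const h13 ht (hasDerivAt_of_contDiffOn c1 ht)
      (hasDerivAt_of_contDiffOn c3 ht)
    rw [lprod_comm]
    linarith [h23 t ht]
  · have := lprod_leibniz_of_const h23 ht (hasDerivAt_of_contDiffOn c2 ht)
      (hasDerivAt_of_contDiffOn c3 ht)
    rw [lprod_comm]
    linarith

lemma curve_gram {a b : ℝ} {α : ℝ → Fin 3 → ℝ}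
    (hα : ContDiffOn ℝ (⊤ : ℕ∞) α (Ioo a b))
    (hnull : ∀ t ∈ Ioo a b, lprod (deriv α t) (deriv α t) = 0)
    (hnorm : ∀ t ∈ Ioo a b, lprod (deriv (deriv α) t) (deriv (deriv α) t) = 1)
    {t : ℝ} (ht : t ∈ Ioo a b) :
    (frameMat (deriv α t) (deriv (deriv α) t) (deriv (deriv (deriv α)) t)).transpose * gram *
      frameMat (deriv α t) (deriv (deriv α) t) (deriv (deriv (deriv α)) t) =
    frameGram (lprod (deriv (deriv (deriv α)) t) (deriv (deriv (deriv α)) t)) := by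
  obtain ⟨h12, h13, h23, -, -⟩ := frame_relations hα hnull hnorm t ht
  exact frameMat_gram (hnull t ht) h12 h13 (hnorm t ht) h23 rfl

/-- The Frenet equation `α⁗ = -(c′/2) α′ - c α″`, where `c = ⟨α‴,α‴⟩`, in components;
`c'` is the derivative of `c`. -/
lemma frenet_equation {a b : ℝ} {α : ℝ → Fin 3 → ℝ}
    (hα : ContDiffOn ℝ (⊤ : ℕ∞) α (Ioo a b))
    (hnull : ∀ t ∈ Ioo a b, lprod (deriv α t) (deriv α t) = 0)
    (hnorm : ∀ t ∈ Ioo a b, lprod (deriv (deriv α) t) (deriv (deriv α) t) = 1)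
    {t : ℝ} (ht : t ∈ Ioo a b) {c' : ℝ}
    (hc : HasDerivAt
      (fun s => lprod (deriv (deriv (deriv α)) s) (deriv (deriv (deriv α)) s)) c' t) (i : Fin 3) :
    deriv (deriv (deriv (deriv α))) t i = -(c' / 2) * deriv α t i -
      lprod (deriv (deriv (deriv α)) t) (deriv (deriv (deriv α)) t) * deriv (deriv α) t i := by
  obtain ⟨-, -, -, h41, h42⟩ := frame_relations hα hnull hnorm t ht
  have d := hasDerivAt_of_contDiffOn
    (contDiffOn_deriv (contDiffOn_deriv (contDiffOn_deriv hα))) ht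
  have hc' := hc.unique (hasDerivAt_lprod d d)
  rw [lprod_comm (deriv (deriv (deriv α)) t) (deriv (deriv (deriv (deriv α))) t)] at hc'
  rw [frame_expansion (curve_gram hα hnull hnorm ht) (deriv (deriv (deriv (deriv α))) t) i,
    h41, h42, hc']
  ring

/-- A function with vanishing derivative on an open interval is constant there. -/
lemma eq_of_hasDerivAt_zero {a b : ℝ} {f : ℝ → ℝ} (h : ∀ t ∈ Ioo a b, HasDerivAt f 0 t)
    {s t : ℝ} (hs : s ∈ Ioo a b) (ht : t ∈ Ioo a b) : f s = f t :=
  isOpen_Ioo.is_const_of_deriv_eq_zero isPreconnected_Ioo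
    (fun x hx => (h x hx).differentiableAt.differentiableWithinAt)
    (fun x hx => (h x hx).deriv) hs ht

/-- Two normalized isotropic curves with the same curvature function and the
same Frenet-frame orientation at one point are congruent under the restricted Poincaré group. -/
theorem congruence_of_isotropic_curves (a b : ℝ) (α β : ℝ → Fin 3 → ℝ)
    (hα : ContDiffOn ℝ (⊤ : ℕ∞) α (Ioo a b))
    (hβ : ContDiffOn ℝ (⊤ : ℕ∞) β (Ioo a b))
    (hαnull : ∀ t ∈ Ioo a b, lprod (deriv α t) (deriv α t) = 0)
    (hαfut : ∀ t ∈ Ioo a b, futDir (deriv α t))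
    (hαnorm : ∀ t ∈ Ioo a b, lprod (deriv (deriv α) t) (deriv (deriv α) t) = 1)
    (hβnull : ∀ t ∈ Ioo a b, lprod (deriv β t) (deriv β t) = 0)
    (hβfut : ∀ t ∈ Ioo a b, futDir (deriv β t))
    (hβnorm : ∀ t ∈ Ioo a b, lprod (deriv (deriv β) t) (deriv (deriv β) t) = 1)
    (hcurv : ∀ t ∈ Ioo a b,
      lprod (deriv (deriv (deriv α)) t) (deriv (deriv (deriv α)) t) =
        lprod (deriv (deriv (deriv β)) t) (deriv (deriv (deriv β)) t))
    (t₀ : ℝ) (ht₀ : t₀ ∈ Ioo a b)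
    (hdet :
      (Matrix.of ![deriv α t₀, deriv (deriv α) t₀, deriv (deriv (deriv α)) t₀]).transpose.det =
      (Matrix.of ![deriv β t₀, deriv (deriv β) t₀, deriv (deriv (deriv β)) t₀]).transpose.det) :
    ∃ (q : Fin 3 → ℝ) (A : Matrix (Fin 3) (Fin 3) ℝ),
      (∀ x y : Fin 3 → ℝ, lprod (A.mulVec x) (A.mulVec y) = lprod x y) ∧
      A.det = 1 ∧
      ∀ t ∈ Ioo a b, β t = A.mulVec (α t) + q := by
  set a₁ := deriv α with ha₁
  set a₂ := deriv a₁ with ha₂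
  set a₃ := deriv a₂ with ha₃
  set b₁ := deriv β with hb₁
  set b₂ := deriv b₁ with hb₂
  set b₃ := deriv b₂ with hb₃
  have ca₁ := contDiffOn_deriv hα
  have ca₂ := contDiffOn_deriv ca₁
  have ca₃ := contDiffOn_deriv ca₂
  have cb₁ := contDiffOn_deriv hβ
  have cb₂ := contDiffOn_deriv cb₁
  have cb₃ := contDiffOn_deriv cb₂
  let c : ℝ → ℝ := fun t => lprod (a₃ t) (a₃ t)
  let F : ℝ → Matrix (Fin 3) (Fin 3) ℝ := fun t => frameMat (a₁ t) (a₂ t) (a₃ t)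
  let F' : ℝ → Matrix (Fin 3) (Fin 3) ℝ := fun t => frameMat (b₁ t) (b₂ t) (b₃ t)
  have hF : ∀ t ∈ Ioo a b, (F t).transpose * gram * F t = frameGram (c t) :=
    fun t ht => curve_gram hα hαnull hαnorm ht
  have hF' : ∀ t ∈ Ioo a b, (F' t).transpose * gram * F' t = frameGram (c t) := fun t ht => by
    have h := curve_gram hβ hβnull hβnorm ht
    rw [← hcurv t ht] at h
    exact h
  have hconst : ∀ t ∈ Ioo a b,
      transition (c t) (F t) (F' t) = transition (c t₀) (F t₀) (F' t₀) := by
    intro t ht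
    ext i j
    refine eq_of_hasDerivAt_zero (f := fun s => transition (c s) (F s) (F' s) i j) ?_ ht ht₀
    intro s hs
    have da₃ := hasDerivAt_of_contDiffOn ca₃ hs
    have dc : HasDerivAt c _ s := hasDerivAt_lprod da₃ da₃
    set c' := lprod (deriv a₃ s) (a₃ s) + lprod (a₃ s) (deriv a₃ s)
    have fa := frenet_equation hα hαnull hαnorm hs dc
    have dc' : HasDerivAt (fun r => lprod (b₃ r) (b₃ r)) c' s := by
      refine dc.congr_of_eventuallyEq ?_
      filter_upwards [isOpen_Ioo.mem_nhds hs] with r hr using (hcurv r hr).symm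
    have fb := frenet_equation hβ hβnull hβnorm hs dc'
    have pa₁ := hasDerivAt_pi.1 (hasDerivAt_of_contDiffOn ca₁ hs)
    have pa₂ := hasDerivAt_pi.1 (hasDerivAt_of_contDiffOn ca₂ hs)
    have pa₃ := hasDerivAt_pi.1 da₃
    have pb₁ := hasDerivAt_pi.1 (hasDerivAt_of_contDiffOn cb₁ hs)
    have pb₂ := hasDerivAt_pi.1 (hasDerivAt_of_contDiffOn cb₂ hs)
    have pb₃ := hasDerivAt_pi.1 (hasDerivAt_of_contDiffOn cb₃ hs)
    simp only [F, F', transition_apply]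
    have hsum := HasDerivAt.fun_sum (u := Finset.univ) (fun k _ =>
      ((((((dc.neg.mul (pb₁ i)).mul (pa₁ k)).sub ((pb₁ i).mul (pa₃ k))).add
        ((pb₂ i).mul (pa₂ k))).sub ((pb₃ i).mul (pa₁ k))).mul_const (gram k j)))
    refine hsum.congr_deriv (Finset.sum_eq_zero fun k _ => ?_)
    have fak := fa k
    have fbi := fb i
    simp only [← ha₁, ← ha₂, ← ha₃, ← hb₁, ← hb₂, ← hb₃] at fak fbi
    rw [fak, fbi, ← hcurv s hs]
    simp only [c, Pi.neg_apply, Pi.mul_apply]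
    ring
  set A := transition (c t₀) (F t₀) (F' t₀) with hA
  have hvel : ∀ t ∈ Ioo a b, A.mulVec (a₁ t) = b₁ t := by
    intro t ht
    have h : A * F t = F' t := by rw [← hconst t ht]; exact transition_mul (hF t ht)
    ext i
    exact congrFun (congrFun h i) 0
  refine ⟨β t₀ - A.mulVec (α t₀), A,
    transition_isometry (hF t₀ ht₀) (hF' t₀ ht₀), ?_, ?_⟩
  · have h : A.det * (F t₀).det = (F' t₀).det := by
      rw [← Matrix.det_mul, hA, transition_mul (hF t₀ ht₀)]
    have hd : (F t₀).det = (F' t₀).det := hdet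
    rw [← hd] at h
    exact mul_right_cancel₀ (det_ne_zero_of_gram (hF t₀ ht₀)) (h.trans (one_mul _).symm)
  · intro t ht
    ext i
    have h : β t i - A.mulVec (α t) i = β t₀ i - A.mulVec (α t₀) i := by
      refine eq_of_hasDerivAt_zero (f := fun s => β s i - A.mulVec (α s) i) ?_ ht ht₀
      intro s hs
      have pa := hasDerivAt_pi.1 (hasDerivAt_of_contDiffOn hα hs)
      have pb := hasDerivAt_pi.1 (hasDerivAt_of_contDiffOn hβ hs)
      have hsum := HasDerivAt.fun_sum (u := Finset.univ) (fun k _ => (pa k).const_mul (A i k))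
      refine ((pb i).sub hsum).congr_deriv ?_
      exact sub_eq_zero.2 (congrFun (hvel s hs) i).symm
    simp only [Pi.add_apply, Pi.sub_apply]
    linarith
end
end

section
/- Let k:(a,b)→ℝ be a smooth function, t₀ ∈ (a,b), x₀ ∈ ℝ³, and let (B₁,B₂,B₃) be vectors in ℝ^{2,1} with ⟨Bᵢ,Bⱼ⟩ = gᵢⱼ and B₁ future-directed. Then there exists a unique normalized isotropic curve α:(a,b)→ℝ^{2,1} whose curvature function is k and which satisfies α(t₀)=x₀, α′(t₀)=B₁, α″(t₀)=B₂, and α‴(t₀) − k(t₀)α′(t₀) = B₃. -/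
/-!
With `u = α'`, `v = α''`, `w = α''' - kα'`, a normalized isotropic curve of curvature `k` is the
same thing as a solution of the linear Frenet system
`α' = u, u' = v, v' = k u + w, w' = k v`
whose frame `(u, v, w)` has Gram matrix `g` and whose first vector is future-directed.

* From curve to system (`IsIsotropicSol.isFrenet`): differentiating `⟨u,u⟩ = 0` and `⟨v,v⟩ = 1`
  shows that the frame has Gram matrix `g`; differentiating those relations shows that `w' - k v`
  is orthogonal to the frame, hence zero.
* From system to curve (`IsFrenet.isIsotropicSol`): the tensor `-(u ⊗ w + w ⊗ u) + v ⊗ v` has zero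
  derivative along the system. Its being equal to `g⁻¹ = g` is equivalent to the frame having Gram
  matrix `g` (`orthonormal_iff_complete`), so the Gram matrix is preserved. The vector `u` is then
  null and nonzero, so its time component never vanishes and keeps its sign.

The system acts separately on each of the three coordinates, so existence and uniqueness are
needed only for an ODE in `ℝ⁴` whose field is Lipschitz uniformly on compact time intervals.
On a compact interval, Picard–Lindelöf is applied to the field truncated to a large cube, and the
Grönwall bound shows that the truncation is inactive along the solution
(`exists_ode_solution_Icc`); uniqueness glues these solutions over `(a, b)`
(`exists_ode_solution_Ioo`).
-/

open Set

noncomputable section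

/-- The predicate: `α` is a smooth normalized isotropic curve on `(a,b)` with curvature `k`
and with the prescribed initial position and Frenet frame at `t₀`. -/
def IsIsotropicSol (a b t₀ : ℝ) (k : ℝ → ℝ) (x₀ B₁ B₂ B₃ : Fin 3 → ℝ)
    (α : ℝ → Fin 3 → ℝ) : Prop :=
  ContDiffOn ℝ (⊤ : ℕ∞) α (Ioo a b) ∧
  (∀ t ∈ Ioo a b,
    lprod (deriv α t) (deriv α t) = 0 ∧
    futDir (deriv α t) ∧
    lprod (deriv (deriv α) t) (deriv (deriv α) t) = 1 ∧
    -(1 / 2) * lprod (deriv (deriv (deriv α)) t) (deriv (deriv (deriv α)) t) = k t) ∧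
  α t₀ = x₀ ∧
  deriv α t₀ = B₁ ∧
  deriv (deriv α) t₀ = B₂ ∧
  deriv (deriv (deriv α)) t₀ - k t₀ • deriv α t₀ = B₃


/-! ### Global solutions of globally Lipschitz ODEs -/

/-- Two-sided Grönwall bound: if `‖f'‖ ≤ K‖f‖` on `[c, d]`, then `f` grows at most exponentially
away from any base point of `[c, d]`. -/
lemma norm_le_mul_exp_of_norm_deriv_le {E : Type*} [NormedAddCommGroup E] [NormedSpace ℝ E]
    {f f' : ℝ → E} {K c d t₀ : ℝ}
    (ht₀ : t₀ ∈ Icc c d) (hf : ∀ t ∈ Icc c d, HasDerivWithinAt f (f' t) (Icc c d) t)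
    (hK : ∀ t ∈ Icc c d, ‖f' t‖ ≤ K * ‖f t‖) :
    ∀ t ∈ Icc c d, ‖f t‖ ≤ ‖f t₀‖ * Real.exp (K * |t - t₀|) := by
  intro t ht
  have hcont : ContinuousOn f (Icc c d) := fun s hs => (hf s hs).continuousWithinAt
  rcases le_total t₀ t with h | h
  · have hsub : Icc t₀ t ⊆ Icc c d := Icc_subset_Icc ht₀.1 ht.2
    have := norm_le_gronwallBound_of_norm_deriv_right_le (f := f) (f' := f') (K := K) (ε := 0)
      (δ := ‖f t₀‖) (hcont.mono hsub)
      (fun s hs => ((hf s (hsub (Ico_subset_Icc_self hs))).mono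
        (Icc_subset_Icc_left (hsub (Ico_subset_Icc_self hs)).1)).mono_of_mem_nhdsWithin
          (Icc_mem_nhdsGE (hs.2.trans_le ht.2)))
      le_rfl (fun s hs => by simpa using hK s (hsub (Ico_subset_Icc_self hs))) t ⟨h, le_rfl⟩
    rwa [gronwallBound_ε0, ← abs_of_nonneg (sub_nonneg.2 h)] at this
  · -- Reverse time.
    have hsub : Icc t t₀ ⊆ Icc c d := Icc_subset_Icc ht.1 ht₀.2
    have hneg : MapsTo (fun s : ℝ => -s) (Icc (-t₀) (-t)) (Icc t t₀) := fun s hs =>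
      ⟨by linarith [hs.2], by linarith [hs.1]⟩
    have := norm_le_gronwallBound_of_norm_deriv_right_le (f := fun s => f (-s))
      (f' := fun s => - f' (-s)) (K := K) (ε := 0)
      (δ := ‖f t₀‖) (a := -t₀) (b := -t) ((hcont.mono hsub).comp continuousOn_neg hneg)
      (fun s hs => by
        have hs' := hneg (Ico_subset_Icc_self hs)
        have h1 : HasDerivWithinAt f (f' (-s)) (Iic (-s)) (-s) :=
          ((hf (-s) (hsub hs')).mono
            (Icc_subset_Icc_right (hsub hs').2)).mono_of_mem_nhdsWithin
          (Icc_mem_nhdsLE (by linarith [hs.2, ht.1]))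
        have h2 := h1.scomp (h := fun s : ℝ => -s) s (hasDerivAt_neg s).hasDerivWithinAt
          (s := Ici s) (fun r hr => by simpa using hr)
        simpa using! h2)
      (by simp) (fun s hs => by
        simpa using hK (-s) (hsub (hneg (Ico_subset_Icc_self hs)))) (-t) ⟨by linarith, le_rfl⟩
    rw [gronwallBound_ε0, show -t - -t₀ = |t - t₀| by
      rw [abs_of_nonpos (by linarith)]; ring] at this
    simpa using this

/-- Coordinatewise truncation of a vector to the cube `[-R, R]^ι`, i.e. to the closed ball of
radius `R` of the sup norm. -/
def clampVec {ι : Type*} (R : ℝ) (x : ι → ℝ) : ι → ℝ := fun i => max (-R) (min R (x i))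

lemma lipschitzWith_clampVec {ι : Type*} [Fintype ι] (R : ℝ) :
    LipschitzWith 1 (clampVec R : (ι → ℝ) → ι → ℝ) := by
  refine LipschitzWith.of_dist_le_mul fun x y => ?_
  rw [NNReal.coe_one, one_mul, dist_pi_le_iff dist_nonneg]
  intro i
  refine le_trans ?_ (dist_le_pi_dist x y i)
  have := ((LipschitzWith.id (α := ℝ)).const_min R).const_max (-R)
  simpa [clampVec] using this.dist_le_mul (x i) (y i)

lemma norm_clampVec_le {ι : Type*} [Fintype ι] {R : ℝ} (hR : 0 ≤ R) (x : ι → ℝ) :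
    ‖clampVec R x‖ ≤ R := by
  rw [pi_norm_le_iff_of_nonneg hR]
  intro i
  rw [Real.norm_eq_abs, abs_le]
  exact ⟨le_max_left _ _, max_le (by linarith) (min_le_left _ _)⟩

lemma norm_clampVec_le_norm {ι : Type*} [Fintype ι] {R : ℝ} (hR : 0 ≤ R) (x : ι → ℝ) :
    ‖clampVec R x‖ ≤ ‖x‖ := by
  have h0 : clampVec R (0 : ι → ℝ) = 0 := by
    funext i; simp [clampVec, hR]
  have := (lipschitzWith_clampVec R).dist_le_mul x 0
  simpa [h0] using this

lemma clampVec_of_norm_le {ι : Type*} [Fintype ι] {R : ℝ} {x : ι → ℝ} (hx : ‖x‖ ≤ R) :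
    clampVec R x = x := by
  funext i
  have := abs_le.1 ((norm_le_pi_norm x i).trans hx)
  simp [clampVec, this.1, this.2]

/-- A vector field vanishing at the origin which is `K`-Lipschitz uniformly in `t ∈ [c, d]` has a
solution on all of `[c, d]`: Picard–Lindelöf applies on the whole interval to the field
truncated to a large cube, and by Grönwall the solution never feels the truncation. -/
lemma exists_ode_solution_Icc {ι : Type*} [Fintype ι] {V : ℝ → (ι → ℝ) → ι → ℝ}
    {c d t₀ : ℝ} {K : NNReal} (ht₀ : t₀ ∈ Icc c d) (hV0 : ∀ t, V t 0 = 0)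
    (hlip : ∀ t ∈ Icc c d, LipschitzWith K (V t))
    (hcont : ∀ x, ContinuousOn (fun t => V t x) (Icc c d)) (x₀ : ι → ℝ) :
    ∃ x : ℝ → ι → ℝ, x t₀ = x₀ ∧
      ∀ t ∈ Icc c d, HasDerivWithinAt x (V t (x t)) (Icc c d) t := by
  have hcd : 0 ≤ d - c := by linarith [ht₀.1, ht₀.2]
  have hVn : ∀ t ∈ Icc c d, ∀ x, ‖V t x‖ ≤ K * ‖x‖ := fun t ht x => by
    simpa [hV0] using (hlip t ht).dist_le_mul x 0
  -- The a priori Grönwall bound for the solution.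
  obtain ⟨R, hR⟩ : ∃ R : ℝ, R = ‖x₀‖ * Real.exp (K * (d - c)) := ⟨_, rfl⟩
  have hR0 : 0 ≤ R := by rw [hR]; positivity
  obtain ⟨L, hL⟩ : ∃ L : NNReal, (L : ℝ) = K * R := ⟨_, Real.coe_toNNReal _ (by positivity)⟩
  obtain ⟨ρ, hρ⟩ : ∃ ρ : NNReal, (ρ : ℝ) = K * R * (d - c) :=
    ⟨_, Real.coe_toNNReal _ (by positivity)⟩
  have hpl : IsPicardLindelof (fun t x => V t (clampVec R x)) (⟨t₀, ht₀⟩ : Icc c d) x₀ ρ 0 L K :=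
    { lipschitzOnWith := fun t ht => by
        have := (hlip t ht).comp (lipschitzWith_clampVec (ι := ι) R)
        rw [mul_one] at this
        exact this.lipschitzOnWith
      continuousOn := fun x _ => hcont _
      norm_le := fun t ht x _ => (hVn t ht _).trans (by
        have := norm_clampVec_le hR0 x
        rw [hL]; gcongr)
      mul_max_le := by
        rw [hρ, hL, NNReal.coe_zero, sub_zero]
        have : max (d - t₀) (t₀ - c) ≤ d - c :=
          max_le (by linarith [ht₀.1]) (by linarith [ht₀.2])
        gcongr }
  obtain ⟨x, hx0, hx⟩ := hpl.exists_eq_forall_mem_Icc_hasDerivWithinAt₀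
  refine ⟨x, hx0, fun t ht => ?_⟩
  have hb := norm_le_mul_exp_of_norm_deriv_le (K := K) ht₀ hx (fun s hs => (hVn s hs _).trans (by
    have := norm_clampVec_le_norm hR0 (x s)
    gcongr)) t ht
  have hxR : ‖x t‖ ≤ R := by
    refine hb.trans ?_
    simp only at hx0
    rw [hx0, hR]
    have : |t - t₀| ≤ d - c := by
      rw [abs_le]; constructor <;> linarith [ht.1, ht.2, ht₀.1, ht₀.2]
    gcongr
  have := hx t ht
  simpa only [clampVec_of_norm_le hxR] using this

/-- Uniqueness of ODE solutions on an open interval, for a field which is Lipschitz uniformly on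
compact subintervals. -/
lemma ode_solution_unique_Ioo {E : Type*} [NormedAddCommGroup E] [NormedSpace ℝ E]
    {V : ℝ → E → E} {a b t₀ : ℝ} (ht₀ : t₀ ∈ Ioo a b)
    (hlip : ∀ c d, a < c → d < b → ∃ K : NNReal, ∀ t ∈ Icc c d, LipschitzWith K (V t))
    {x y : ℝ → E} (hx : ∀ t ∈ Ioo a b, HasDerivAt x (V t (x t)) t)
    (hy : ∀ t ∈ Ioo a b, HasDerivAt y (V t (y t)) t) (h0 : x t₀ = y t₀) :
    EqOn x y (Ioo a b) := by
  intro t ht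
  obtain ⟨c, hac, hc⟩ := exists_between (lt_min ht.1 ht₀.1)
  obtain ⟨d, hd, hdb⟩ := exists_between (max_lt ht.2 ht₀.2)
  obtain ⟨K, hK⟩ := hlip c d hac hdb
  rw [lt_min_iff] at hc
  rw [max_lt_iff] at hd
  have hsub : Ioo c d ⊆ Ioo a b := Ioo_subset_Ioo hac.le hdb.le
  exact ODE_solution_unique_of_mem_Ioo (v := V) (s := fun _ => univ) (K := K)
    (fun s hs => (hK s (Ioo_subset_Icc_self hs)).lipschitzOnWith) ⟨hc.2, hd.2⟩
    (fun s hs => ⟨hx s (hsub hs), trivial⟩) (fun s hs => ⟨hy s (hsub hs), trivial⟩) h0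
    ⟨hc.1, hd.1⟩

/-- Global existence on `(a, b)`, by gluing the solutions on compact subintervals. -/
lemma exists_ode_solution_Ioo {ι : Type*} [Fintype ι] {V : ℝ → (ι → ℝ) → ι → ℝ}
    {a b t₀ : ℝ} (ht₀ : t₀ ∈ Ioo a b) (hV0 : ∀ t, V t 0 = 0)
    (hlip : ∀ c d, a < c → d < b → ∃ K : NNReal, ∀ t ∈ Icc c d, LipschitzWith K (V t))
    (hcont : ∀ x, ContinuousOn (fun t => V t x) (Ioo a b)) (x₀ : ι → ℝ) :
    ∃ x : ℝ → ι → ℝ, x t₀ = x₀ ∧ ∀ t ∈ Ioo a b, HasDerivAt x (V t (x t)) t := by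
  have key : ∀ c d, a < c → d < b → t₀ ∈ Ioo c d → ∃ x : ℝ → ι → ℝ, x t₀ = x₀ ∧
      ∀ t ∈ Ioo c d, HasDerivAt x (V t (x t)) t := by
    intro c d hc hd h0
    obtain ⟨K, hK⟩ := hlip c d hc hd
    obtain ⟨x, h1, h2⟩ := exists_ode_solution_Icc (Ioo_subset_Icc_self h0) hV0 hK
      (fun x => (hcont x).mono (Icc_subset_Ioo hc hd)) x₀
    exact ⟨x, h1, fun t ht => (h2 t (Ioo_subset_Icc_self ht)).hasDerivAt (Icc_mem_nhds ht.1 ht.2)⟩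
  choose! X hX0 hX using key
  -- Any two of the solutions agree where both are defined.
  have agree : ∀ c d c' d', a < c → d < b → t₀ ∈ Ioo c d → a < c' → d' < b → t₀ ∈ Ioo c' d' →
      ∀ t, t ∈ Ioo c d → t ∈ Ioo c' d' → X c d t = X c' d' t := by
    intro c d c' d' hc hd h0 hc' hd' h0' t ht ht'
    have hlip' : ∀ p q, max c c' < p → q < min d d' →
        ∃ K : NNReal, ∀ t ∈ Icc p q, LipschitzWith K (V t) := fun p q hp hq =>
      hlip p q (hc.trans ((le_max_left _ _).trans_lt hp)) ((hq.trans_le (min_le_left _ _)).trans hd)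
    refine ode_solution_unique_Ioo (t₀ := t₀) (a := max c c') (b := min d d') (V := V)
      ⟨max_lt h0.1 h0'.1, lt_min h0.2 h0'.2⟩ hlip'
      (fun s hs => hX c d hc hd h0 s
        ⟨(le_max_left _ _).trans_lt hs.1, hs.2.trans_le (min_le_left _ _)⟩)
      (fun s hs => hX c' d' hc' hd' h0' s
        ⟨(le_max_right _ _).trans_lt hs.1, hs.2.trans_le (min_le_right _ _)⟩)
      ((hX0 c d hc hd h0).trans (hX0 c' d' hc' hd' h0').symm)
      ⟨max_lt ht.1 ht'.1, lt_min ht.2 ht'.2⟩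
  have hint : ∀ t ∈ Ioo a b, ∃ c d, a < c ∧ d < b ∧ t₀ ∈ Ioo c d ∧ t ∈ Ioo c d := by
    intro t ht
    obtain ⟨c, hac, hc⟩ := exists_between (lt_min ht.1 ht₀.1)
    obtain ⟨d, hd, hdb⟩ := exists_between (max_lt ht.2 ht₀.2)
    rw [lt_min_iff] at hc
    rw [max_lt_iff] at hd
    exact ⟨c, d, hac, hdb, ⟨hc.2, hd.2⟩, ⟨hc.1, hd.1⟩⟩
  choose! C D hC hD hCD0 hCD using hint
  have heq : ∀ c d, a < c → d < b → t₀ ∈ Ioo c d → ∀ t ∈ Ioo c d,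
      X (C t) (D t) t = X c d t := by
    intro c d hc hd h0 t ht
    have hab : t ∈ Ioo a b := Ioo_subset_Ioo hc.le hd.le ht
    exact agree _ _ _ _ (hC t hab) (hD t hab) (hCD0 t hab) hc hd h0 t (hCD t hab) ht
  refine ⟨fun t => X (C t) (D t) t, hX0 _ _ (hC _ ht₀) (hD _ ht₀) (hCD0 _ ht₀), fun t ht => ?_⟩
  refine (hX _ _ (hC t ht) (hD t ht) (hCD0 t ht) t (hCD t ht)).congr_of_eventuallyEq ?_
  filter_upwards [Ioo_mem_nhds (hCD t ht).1 (hCD t ht).2] with s hs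
  exact heq _ _ (hC t ht) (hD t ht) (hCD0 t ht) s hs

/-! ### The Frenet system -/

/-- The scalar Frenet vector field: one coordinate of the system
`α' = u, u' = v, v' = k u + w, w' = k v` for the curve `α` and its frame `(u, v, w)`. -/
def frenetField (k : ℝ → ℝ) (t : ℝ) (x : Fin 4 → ℝ) : Fin 4 → ℝ :=
  ![x 1, x 2, k t * x 1 + x 3, k t * x 2]

lemma frenetField_lipschitz {a b : ℝ} {k : ℝ → ℝ} (hk : ContinuousOn k (Ioo a b)) (c d : ℝ)
    (hc : a < c) (hd : d < b) :
    ∃ K : NNReal, ∀ t ∈ Icc c d, LipschitzWith K (frenetField k t) := by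
  obtain ⟨M, hM⟩ := isCompact_Icc.exists_bound_of_continuousOn (hk.mono (Icc_subset_Ioo hc hd))
  obtain ⟨K, hK⟩ : ∃ K : NNReal, (K : ℝ) = |M| + 1 := ⟨_, Real.coe_toNNReal _ (by positivity)⟩
  refine ⟨K, fun t ht => LipschitzWith.of_dist_le_mul fun x y => ?_⟩
  have hkt : |k t| ≤ |M| := (hM t ht).trans (le_abs_self M)
  have hi : ∀ i, |x i - y i| ≤ dist x y := fun i => dist_le_pi_dist x y i
  have hmul : ∀ i, |k t * (x i - y i)| ≤ |M| * dist x y := fun i => by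
    rw [abs_mul]; exact mul_le_mul hkt (hi i) (abs_nonneg _) (abs_nonneg _)
  have hD : 0 ≤ dist x y := dist_nonneg
  have hMD : 0 ≤ |M| * dist x y := by positivity
  rw [hK, dist_pi_le_iff (by positivity)]
  intro i
  rw [Real.dist_eq]
  fin_cases i
  · simp only [frenetField]
    have := hi 1
    simp; linarith
  · have := hi 2
    simp [frenetField]; linarith
  · have h1 := hmul 1
    have h2 := hi 3
    have h3 := abs_add_le (k t * (x 1 - y 1)) (x 3 - y 3)
    have : k t * x 1 + x 3 - (k t * y 1 + y 3) = k t * (x 1 - y 1) + (x 3 - y 3) := by ring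
    simp [frenetField]; rw [this]; linarith
  · have h1 := hmul 2
    simp [frenetField]; rw [← mul_sub]; linarith

/-- `(α, u, v, w)` solves the Frenet system with curvature `k` on `(a, b)`. -/
structure IsFrenet (a b : ℝ) (k : ℝ → ℝ) (α u v w : ℝ → Fin 3 → ℝ) : Prop where
  deriv_curve : ∀ t ∈ Ioo a b, HasDerivAt α (u t) t
  deriv_fst : ∀ t ∈ Ioo a b, HasDerivAt u (v t) t
  deriv_snd : ∀ t ∈ Ioo a b, HasDerivAt v (k t • u t + w t) t
  deriv_thd : ∀ t ∈ Ioo a b, HasDerivAt w (k t • v t) t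

lemma exists_isFrenet {a b t₀ : ℝ} (ht₀ : t₀ ∈ Ioo a b) {k : ℝ → ℝ}
    (hk : ContinuousOn k (Ioo a b)) (x₀ B₁ B₂ B₃ : Fin 3 → ℝ) :
    ∃ α u v w, IsFrenet a b k α u v w ∧ α t₀ = x₀ ∧ u t₀ = B₁ ∧ v t₀ = B₂ ∧ w t₀ = B₃ := by
  have hex : ∀ j : Fin 3, ∃ x : ℝ → Fin 4 → ℝ, x t₀ = ![x₀ j, B₁ j, B₂ j, B₃ j] ∧
      ∀ t ∈ Ioo a b, HasDerivAt x (frenetField k t (x t)) t := fun j => by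
    refine exists_ode_solution_Ioo ht₀ (fun t => ?_) (frenetField_lipschitz hk) (fun x => ?_) _
    · funext i; fin_cases i <;> simp [frenetField]
    · rw [continuousOn_pi]
      intro i
      fin_cases i <;> simp [frenetField] <;> fun_prop
  choose x hx0 hx using hex
  refine ⟨fun t j => x j t 0, fun t j => x j t 1, fun t j => x j t 2, fun t j => x j t 3,
    ⟨?_, ?_, ?_, ?_⟩, ?_, ?_, ?_, ?_⟩
  · exact fun t ht => hasDerivAt_pi.2 fun j => by
      simpa [frenetField] using hasDerivAt_pi.1 (hx j t ht) 0
  · exact fun t ht => hasDerivAt_pi.2 fun j => by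
      simpa [frenetField] using hasDerivAt_pi.1 (hx j t ht) 1
  · exact fun t ht => hasDerivAt_pi.2 fun j => by
      simpa [frenetField] using hasDerivAt_pi.1 (hx j t ht) 2
  · exact fun t ht => hasDerivAt_pi.2 fun j => by
      simpa [frenetField] using hasDerivAt_pi.1 (hx j t ht) 3
  all_goals funext j; simp [hx0 j]

lemma IsFrenet.curve_unique {a b t₀ : ℝ} (ht₀ : t₀ ∈ Ioo a b) {k : ℝ → ℝ}
    (hk : ContinuousOn k (Ioo a b)) {α u v w α' u' v' w' : ℝ → Fin 3 → ℝ}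
    (h : IsFrenet a b k α u v w) (h' : IsFrenet a b k α' u' v' w')
    (hα : α t₀ = α' t₀) (hu : u t₀ = u' t₀) (hv : v t₀ = v' t₀) (hw : w t₀ = w' t₀) :
    ∀ t ∈ Ioo a b, α t = α' t := by
  have solves : ∀ {α u v w : ℝ → Fin 3 → ℝ}, IsFrenet a b k α u v w → ∀ j, ∀ t ∈ Ioo a b,
      HasDerivAt (fun t => ![α t j, u t j, v t j, w t j])
        (frenetField k t ![α t j, u t j, v t j, w t j]) t := by
    intro α u v w h j t ht
    rw [hasDerivAt_pi]
    intro i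
    fin_cases i
    · simpa [frenetField] using hasDerivAt_pi.1 (h.deriv_curve t ht) j
    · simpa [frenetField] using hasDerivAt_pi.1 (h.deriv_fst t ht) j
    · simpa [frenetField] using hasDerivAt_pi.1 (h.deriv_snd t ht) j
    · simpa [frenetField] using hasDerivAt_pi.1 (h.deriv_thd t ht) j
  intro t ht
  funext j
  have := ode_solution_unique_Ioo ht₀ (frenetField_lipschitz hk) (solves h j) (solves h' j)
    (by simp [hα, hu, hv, hw]) ht
  exact congrFun this 0

lemma IsFrenet.contDiffOn {a b : ℝ} {k : ℝ → ℝ} (hk : ContDiffOn ℝ (⊤ : ℕ∞) k (Ioo a b))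
    {α u v w : ℝ → Fin 3 → ℝ} (h : IsFrenet a b k α u v w) :
    ContDiffOn ℝ (⊤ : ℕ∞) α (Ioo a b) := by
  have step : ∀ {n : ℕ} {f f' : ℝ → Fin 3 → ℝ}, (∀ t ∈ Ioo a b, HasDerivAt f (f' t) t) →
      ContDiffOn ℝ n f' (Ioo a b) → ContDiffOn ℝ (n + 1 : ℕ) f (Ioo a b) := by
    intro n f f' hf hf'
    rw [Nat.cast_add, Nat.cast_one, contDiffOn_succ_iff_deriv_of_isOpen isOpen_Ioo]
    exact ⟨fun t ht => (hf t ht).differentiableAt.differentiableWithinAt, by simp,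
      hf'.congr fun t ht => (hf t ht).deriv⟩
  have hc : ∀ {f f' : ℝ → Fin 3 → ℝ}, (∀ t ∈ Ioo a b, HasDerivAt f (f' t) t) →
      ContDiffOn ℝ (0 : ℕ) f (Ioo a b) := fun hf => by
    rw [Nat.cast_zero, contDiffOn_zero]
    exact fun t ht => (hf t ht).continuousAt.continuousWithinAt
  have main : ∀ n : ℕ, ContDiffOn ℝ n u (Ioo a b) ∧ ContDiffOn ℝ n v (Ioo a b) ∧
      ContDiffOn ℝ n w (Ioo a b) := by
    intro n
    induction n with
    | zero => exact ⟨hc h.deriv_fst, hc h.deriv_snd, hc h.deriv_thd⟩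
    | succ n ih =>
      obtain ⟨hu, hv, hw⟩ := ih
      have hkn : ContDiffOn ℝ n k (Ioo a b) := contDiffOn_infty.1 hk n
      exact ⟨step h.deriv_fst hv, step h.deriv_snd ((hkn.smul hu).add hw),
        step h.deriv_thd (hkn.smul hv)⟩
  refine contDiffOn_infty.2 fun n => ?_
  exact (step h.deriv_curve (main n).1).of_le (by norm_cast; omega)

/-! ### Lorentzian algebra -/

lemma lprod_comm_s3 (x y : Fin 3 → ℝ) : lprod x y = lprod y x := by
  unfold lprod; ring

lemma HasDerivAt.lprod {f g : ℝ → Fin 3 → ℝ} {f' g' : Fin 3 → ℝ} {t : ℝ}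
    (hf : HasDerivAt f f' t) (hg : HasDerivAt g g' t) :
    HasDerivAt (fun s => lprod (f s) (g s)) (lprod f' (g t) + lprod (f t) g') t := by
  have hf := hasDerivAt_pi.1 hf
  have hg := hasDerivAt_pi.1 hg
  have := (((hf 0).mul (hg 2)).add ((hf 2).mul (hg 0))).neg.add ((hf 1).mul (hg 1))
  refine this.congr_deriv ?_
  simp only [_root_.lprod]; ring

/-- Orthonormality of the rows of a frame is equivalent to the completeness relation
`∑ gⁱʲ Bᵢ ⊗ Bⱼ = g⁻¹`, where `g⁻¹ = g`. -/
lemma orthonormal_iff_complete (u v w : Fin 3 → ℝ) :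
    (∀ i j : Fin 3, lprod (![u, v, w] i) (![u, v, w] j) = gram i j) ↔
      ∀ i j : Fin 3, -(u i * w j + w i * u j) + v i * v j = gram i j := by
  obtain ⟨F, hF⟩ : ∃ F : Matrix (Fin 3) (Fin 3) ℝ, F = Matrix.of ![u, v, w] := ⟨_, rfl⟩
  have hgg : gram * gram = 1 := by
    ext i j; fin_cases i <;> fin_cases j <;> simp [gram, Matrix.mul_apply, Fin.sum_univ_three]
  have h1 : (∀ i j : Fin 3, lprod (![u, v, w] i) (![u, v, w] j) = gram i j) ↔
      F * gram * F.transpose = gram := by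
    rw [← Matrix.ext_iff]
    refine forall₂_congr fun i j => ?_
    rw [show (F * gram * F.transpose) i j = lprod (![u, v, w] i) (![u, v, w] j) by
      fin_cases i <;> fin_cases j <;>
        simp [hF, gram, Matrix.mul_apply, Fin.sum_univ_three, lprod, Matrix.vecHead,
          Matrix.vecTail] <;> ring]
  have h2 : (∀ i j : Fin 3, -(u i * w j + w i * u j) + v i * v j = gram i j) ↔
      F.transpose * gram * F = gram := by
    rw [← Matrix.ext_iff]
    refine forall₂_congr fun i j => ?_
    rw [show (F.transpose * gram * F) i j = -(u i * w j + w i * u j) + v i * v j by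
      simp [hF, gram, Matrix.mul_apply, Fin.sum_univ_three]; ring]
  rw [h1, h2]
  -- Both say that `F` and `g Fᵀ g` are inverse to each other.
  have h3 : F * gram * F.transpose = gram ↔ F * (gram * F.transpose * gram) = 1 := by
    constructor
    · intro h
      rw [← Matrix.mul_assoc, ← Matrix.mul_assoc, h, hgg]
    · intro h
      have := congrArg (· * gram) h
      simpa [Matrix.mul_assoc, hgg] using this
  have h4 : F.transpose * gram * F = gram ↔ (gram * F.transpose * gram) * F = 1 := by
    constructor
    · intro h
      rw [Matrix.mul_assoc gram, Matrix.mul_assoc gram, h, hgg]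
    · intro h
      have := congrArg (gram * ·) h
      simpa [← Matrix.mul_assoc, hgg] using this
  rw [h3, h4, mul_eq_one_comm]

lemma eq_zero_of_lprod_frame_eq_zero {u v w x : Fin 3 → ℝ}
    (h : ∀ i j : Fin 3, lprod (![u, v, w] i) (![u, v, w] j) = gram i j)
    (hu : lprod u x = 0) (hv : lprod v x = 0) (hw : lprod w x = 0) : x = 0 := by
  rw [orthonormal_iff_complete] at h
  funext i
  have h0 := h i 0
  have h1 := h i 1
  have h2 := h i 2
  simp only [lprod] at hu hv hw
  -- Contract the completeness relation with the covector `⟨·, x⟩`.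
  have : x i = -(gram i 0 * x 2 + gram i 2 * x 0) + gram i 1 * x 1 := by
    fin_cases i <;> simp [gram]
  rw [this, ← h0, ← h1, ← h2, Pi.zero_apply]
  linear_combination -(u i) * hw - w i * hu + v i * hv

/-- The tensor `-(u ⊗ w + w ⊗ u) + v ⊗ v` is constant along a solution of the Frenet system, so
orthonormality of the frame propagates. -/
lemma IsFrenet.orthonormal {a b t₀ : ℝ} (ht₀ : t₀ ∈ Ioo a b) {k : ℝ → ℝ}
    {α u v w : ℝ → Fin 3 → ℝ} (h : IsFrenet a b k α u v w)
    (h0 : ∀ i j : Fin 3, lprod (![u t₀, v t₀, w t₀] i) (![u t₀, v t₀, w t₀] j) = gram i j) :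
    ∀ t ∈ Ioo a b, ∀ i j : Fin 3,
      lprod (![u t, v t, w t] i) (![u t, v t, w t] j) = gram i j := by
  intro t ht
  rw [orthonormal_iff_complete] at h0 ⊢
  intro i j
  rw [← h0 i j]
  have hd : ∀ s ∈ Ioo a b,
      HasDerivAt (fun s => -(u s i * w s j + w s i * u s j) + v s i * v s j) 0 s := by
    intro s hs
    have hu := hasDerivAt_pi.1 (h.deriv_fst s hs)
    have hv := hasDerivAt_pi.1 (h.deriv_snd s hs)
    have hw := hasDerivAt_pi.1 (h.deriv_thd s hs)
    refine ((((hu i).mul (hw j)).add ((hw i).mul (hu j))).neg.add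
      ((hv i).mul (hv j))).congr_deriv ?_
    simp only [Pi.add_apply, Pi.smul_apply, smul_eq_mul]; ring
  exact isOpen_Ioo.is_const_of_deriv_eq_zero isPreconnected_Ioo
    (fun s hs => (hd s hs).differentiableAt.differentiableWithinAt)
    (fun s hs => (hd s hs).deriv) ht ht₀

/-- A null vector whose time component `x 0 + x 2` is zero vanishes. -/
lemma eq_zero_of_null {x : Fin 3 → ℝ} (h : lprod x x = 0) (hs : x 0 + x 2 = 0) : x = 0 := by
  simp only [lprod] at h
  have h2 : x 2 = - x 0 := by linarith
  rw [h2] at h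
  have h0 : x 0 = 0 := by nlinarith [sq_nonneg (x 0), sq_nonneg (x 1)]
  have h1 : x 1 = 0 := by nlinarith [sq_nonneg (x 0), sq_nonneg (x 1)]
  funext i
  fin_cases i <;> simp [h0, h1, h2]

lemma futDir_iff (x : Fin 3 → ℝ) : futDir x ↔ 0 < x 0 + x 2 := by
  simp only [futDir, lprod, Matrix.cons_val]
  constructor <;> intro h <;> linarith

/-- The time component `u 0 + u 2` of a nowhere vanishing null field has no zero, hence keeps its
sign. -/
lemma futDir_of_null {a b t₀ : ℝ} (ht₀ : t₀ ∈ Ioo a b) {u : ℝ → Fin 3 → ℝ}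
    (hc : ContinuousOn u (Ioo a b)) (hn : ∀ t ∈ Ioo a b, lprod (u t) (u t) = 0)
    (hne : ∀ t ∈ Ioo a b, u t ≠ 0) (h0 : futDir (u t₀)) : ∀ t ∈ Ioo a b, futDir (u t) := by
  intro t ht
  rw [futDir_iff] at h0 ⊢
  by_contra hneg
  have hc' : ContinuousOn (fun t => u t 0 + u t 2) (Ioo a b) := by
    rw [continuousOn_pi] at hc
    exact (hc 0).add (hc 2)
  obtain ⟨s, hs, hs0⟩ := isPreconnected_Ioo.intermediate_value ht ht₀ hc'
    (show (0 : ℝ) ∈ Icc _ _ from ⟨not_lt.1 hneg, h0.le⟩)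
  exact hne s hs (eq_zero_of_null (hn s hs) hs0)

/-! ### Normalized isotropic curves and the Frenet system -/

/-- A normalized isotropic curve, together with the frame `(β', β'', β''' - kβ')`, solves the
Frenet system. -/
lemma IsIsotropicSol.isFrenet {a b t₀ : ℝ} {k : ℝ → ℝ} (hk : ContDiffOn ℝ (⊤ : ℕ∞) k (Ioo a b))
    {x₀ B₁ B₂ B₃ : Fin 3 → ℝ} {β : ℝ → Fin 3 → ℝ}
    (h : IsIsotropicSol a b t₀ k x₀ B₁ B₂ B₃ β) :
    IsFrenet a b k β (deriv β) (deriv (deriv β))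
      (fun t => deriv (deriv (deriv β)) t - k t • deriv β t) := by
  obtain ⟨hβ, hprop, -⟩ := h
  have hd : ∀ {f : ℝ → Fin 3 → ℝ}, ContDiffOn ℝ (⊤ : ℕ∞) f (Ioo a b) →
      ContDiffOn ℝ (⊤ : ℕ∞) (deriv f) (Ioo a b) ∧ ∀ t ∈ Ioo a b, HasDerivAt f (deriv f t) t := by
    intro f hf
    exact ⟨((contDiffOn_infty_iff_deriv_of_isOpen isOpen_Ioo).1 hf).2, fun t ht =>
      ((hf.contDiffAt (isOpen_Ioo.mem_nhds ht)).differentiableAt (by simp)).hasDerivAt⟩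
  obtain ⟨hu, hβ'⟩ := hd hβ
  obtain ⟨hv, hu'⟩ := hd hu
  obtain ⟨hz, hv'⟩ := hd hv
  obtain ⟨hw, hw'⟩ := hd (hz.sub (hk.smul hu))
  generalize hU : deriv β = u at *
  generalize hV : deriv u = v at *
  generalize hZ : deriv v = z at *
  generalize hW : (fun t => z t - k t • u t) = w at *
  generalize hW' : deriv w = w₁ at *
  -- Differentiating a relation that holds on all of `(a, b)`.
  have diff : ∀ {f f' g g' : ℝ → Fin 3 → ℝ} {c : ℝ}, (∀ t ∈ Ioo a b, HasDerivAt f (f' t) t) →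
      (∀ t ∈ Ioo a b, HasDerivAt g (g' t) t) → (∀ t ∈ Ioo a b, lprod (f t) (g t) = c) →
      ∀ t ∈ Ioo a b, lprod (f' t) (g t) + lprod (f t) (g' t) = 0 := by
    intro f f' g g' c hf hg hfg t ht
    refine ((hf t ht).lprod (hg t ht)).unique ?_
    refine (hasDerivAt_const t c).congr_of_eventuallyEq ?_
    filter_upwards [isOpen_Ioo.mem_nhds ht] with s hs using hfg s hs
  have hzw : ∀ t, z t = k t • u t + w t := fun t => by rw [← hW]; simp
  have hv'' : ∀ t ∈ Ioo a b, HasDerivAt v (k t • u t + w t) t := fun t ht => by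
    rw [← hzw]; exact hv' t ht
  have uu : ∀ t ∈ Ioo a b, lprod (u t) (u t) = 0 := fun t ht => (hprop t ht).1
  have vv : ∀ t ∈ Ioo a b, lprod (v t) (v t) = 1 := fun t ht => (hprop t ht).2.2.1
  have uv : ∀ t ∈ Ioo a b, lprod (u t) (v t) = 0 := fun t ht => by
    have := diff hu' hu' uu t ht
    rw [lprod_comm_s3 (v t)] at this; linarith
  have hexp : ∀ (x : Fin 3 → ℝ) t, lprod x (z t) = k t * lprod x (u t) + lprod x (w t) := by
    intro x t; rw [hzw]; simp [lprod]; ring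
  have uw : ∀ t ∈ Ioo a b, lprod (u t) (w t) = -1 := fun t ht => by
    have := diff hu' hv' uv t ht
    rw [vv t ht, hexp, uu t ht] at this; linarith
  have vw : ∀ t ∈ Ioo a b, lprod (v t) (w t) = 0 := fun t ht => by
    have := diff hv' hv' vv t ht
    rw [lprod_comm_s3 (z t), hexp, lprod_comm_s3 (v t) (u t), uv t ht] at this; linarith
  have ww : ∀ t ∈ Ioo a b, lprod (w t) (w t) = 0 := fun t ht => by
    have := (hprop t ht).2.2.2
    rw [hexp, lprod_comm_s3 (z t), lprod_comm_s3 (z t), hexp, hexp, uu t ht, lprod_comm_s3 (w t) (u t),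
      uw t ht] at this
    linarith
  have gr : ∀ t ∈ Ioo a b, ∀ i j : Fin 3,
      lprod (![u t, v t, w t] i) (![u t, v t, w t] j) = gram i j := by
    intro t ht i j
    fin_cases i <;> fin_cases j <;>
      simp [gram, uu t ht, uv t ht, uw t ht, vv t ht, vw t ht, ww t ht,
        lprod_comm_s3 (v t) (u t), lprod_comm_s3 (w t) (u t), lprod_comm_s3 (w t) (v t)]
  refine ⟨hβ', hu', hv'', fun t ht => ?_⟩
  -- `w' - k v` is orthogonal to the frame.
  have hzero : w₁ t - k t • v t = 0 := by
    have hsub : ∀ x, lprod x (w₁ t - k t • v t) = lprod x (w₁ t) - k t * lprod x (v t) := by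
      intro x; simp [lprod]; ring
    refine eq_zero_of_lprod_frame_eq_zero (gr t ht) ?_ ?_ ?_
    · have := diff hu' hw' uw t ht
      rw [hsub, uv t ht]; rw [vw t ht] at this; linarith
    · have := diff hv' hw' vw t ht
      rw [lprod_comm_s3, hexp, lprod_comm_s3, uw t ht, ww t ht] at this
      rw [hsub, vv t ht]; linarith
    · have := diff hw' hw' ww t ht
      rw [lprod_comm_s3] at this
      rw [hsub, lprod_comm_s3 _ (v t), vw t ht]; linarith
  rw [← sub_eq_zero.1 hzero]
  exact hw' t ht

/-- Conversely, a solution of the Frenet system whose initial frame is orthonormal with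
future-directed first vector is a normalized isotropic curve. -/
lemma IsFrenet.isIsotropicSol {a b t₀ : ℝ} (ht₀ : t₀ ∈ Ioo a b) {k : ℝ → ℝ}
    (hk : ContDiffOn ℝ (⊤ : ℕ∞) k (Ioo a b)) {α u v w : ℝ → Fin 3 → ℝ}
    (h : IsFrenet a b k α u v w)
    (h0 : ∀ i j : Fin 3, lprod (![u t₀, v t₀, w t₀] i) (![u t₀, v t₀, w t₀] j) = gram i j)
    (hfut : futDir (u t₀)) :
    IsIsotropicSol a b t₀ k (α t₀) (u t₀) (v t₀) (w t₀) α := by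
  have lift : ∀ {f g g' : ℝ → Fin 3 → ℝ}, (∀ t ∈ Ioo a b, f t = g t) →
      (∀ t ∈ Ioo a b, HasDerivAt g (g' t) t) → ∀ t ∈ Ioo a b, deriv f t = g' t := by
    intro f g g' hfg hg t ht
    refine ((hg t ht).congr_of_eventuallyEq ?_).deriv
    filter_upwards [isOpen_Ioo.mem_nhds ht] with s hs using hfg s hs
  have d1 := lift (fun _ _ => rfl) h.deriv_curve
  have d2 := lift d1 h.deriv_fst
  have d3 := lift d2 h.deriv_snd
  have gr := h.orthonormal ht₀ h0
  have uu : ∀ t ∈ Ioo a b, lprod (u t) (u t) = 0 := fun t ht => by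
    simpa [gram] using gr t ht 0 0
  have uw : ∀ t ∈ Ioo a b, lprod (u t) (w t) = -1 := fun t ht => by
    simpa [gram] using gr t ht 0 2
  have hne : ∀ t ∈ Ioo a b, u t ≠ 0 := fun t ht hz => by
    have := uw t ht
    simp [hz, lprod] at this
  have fd := futDir_of_null ht₀
    (fun t ht => (h.deriv_fst t ht).continuousAt.continuousWithinAt) uu hne hfut
  refine ⟨h.contDiffOn hk, fun t ht => ?_, rfl, d1 t₀ ht₀, d2 t₀ ht₀, ?_⟩
  · rw [d1 t ht, d2 t ht, d3 t ht]
    refine ⟨uu t ht, fd t ht, by simpa [gram] using gr t ht 1 1, ?_⟩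
    have ww : lprod (w t) (w t) = 0 := by simpa [gram] using gr t ht 2 2
    have hexp : lprod (k t • u t + w t) (k t • u t + w t) =
        k t ^ 2 * lprod (u t) (u t) + 2 * k t * lprod (u t) (w t) + lprod (w t) (w t) := by
      simp [lprod]; ring
    rw [hexp, uu t ht, uw t ht, ww]; ring
  · rw [d3 t₀ ht₀, d1 t₀ ht₀]; simp

/-- Existence and uniqueness of a normalized isotropic curve with prescribed
smooth curvature `k`, initial point `x₀`, and initial Lorentz-orthonormal future-directed
Frenet frame `(B₁, B₂, B₃)` at `t₀ ∈ (a,b)`. -/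
theorem exists_unique_isotropic_curve (a b t₀ : ℝ) (ht₀ : t₀ ∈ Ioo a b)
    (k : ℝ → ℝ) (hk : ContDiffOn ℝ (⊤ : ℕ∞) k (Ioo a b))
    (x₀ B₁ B₂ B₃ : Fin 3 → ℝ)
    (horth : ∀ i j : Fin 3, lprod (![B₁, B₂, B₃] i) (![B₁, B₂, B₃] j) = gram i j)
    (hfut : futDir B₁) :
    ∃ α : ℝ → Fin 3 → ℝ,
      IsIsotropicSol a b t₀ k x₀ B₁ B₂ B₃ α ∧
      ∀ β : ℝ → Fin 3 → ℝ, IsIsotropicSol a b t₀ k x₀ B₁ B₂ B₃ β →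
        ∀ t ∈ Ioo a b, β t = α t := by
  obtain ⟨α, u, v, w, hF, rfl, rfl, rfl, rfl⟩ :=
    exists_isFrenet ht₀ hk.continuousOn x₀ B₁ B₂ B₃
  refine ⟨α, hF.isIsotropicSol ht₀ hk horth hfut, fun β hβ => ?_⟩
  obtain ⟨-, -, e0, e1, e2, e3⟩ := id hβ
  exact (hβ.isFrenet hk).curve_unique ht₀ hk.continuousOn hF e0 e1 e2 e3
end
end

section
/- Cross-section of the Marsden–Weinstein fibration, null type: let p, v ∈ ℝ^{2,1} with p ≠ 0, ⟨p,p⟩ = 0, and C₂ := ⟨p,v⟩, and suppose A₂, A₃ ∈ ℝ^{2,1} satisfy ⟨A₂,A₂⟩ = 1, ⟨p,A₂⟩ = 0, ⟨A₃,A₃⟩ = 0, ⟨A₂,A₃⟩ = 0, and ⟨p,A₃⟩ = −1. Define A₁ := p and Q := A₃×v. Then with A the 3×3 matrix with columns A₁,A₂,A₃, m₁ := e₁ and m₂ := −C₂ e₃: A m₁ = p and A m₂ − (A m₁)×Q = v. -/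
/-!
Since `A e₁ = A₁ = p` and `A e₃ = A₃`, everything reduces to evaluating `p × (A₃ × v)`. The Gram
matrix has determinant `-1`, so the triple product identity carries the opposite sign from the
Euclidean one (`lcross_lcross`); with `⟨p,A₃⟩ = -1` it gives `p × (A₃ × v) = -v - ⟨p,v⟩ A₃`, and
subtracting this from `A m₂ = -⟨p,v⟩ A₃` leaves `v`.
-/

open Set

noncomputable section

/-- The Lorentzian triple product identity; its sign is opposite to the Euclidean one. -/
theorem lcross_lcross (a b c : Fin 3 → ℝ) :
    lcross a (lcross b c) = lprod a b • c - lprod a c • b := by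
  ext i
  fin_cases i <;> simp [lcross, lprod] <;> ring

/-- Cross-section of the Marsden–Weinstein fibration, null type:
for `p ≠ 0` with `⟨p,p⟩ = 0`, and `A₂, A₃` completing `A₁ = p` to a null frame
(`⟨A₂,A₂⟩ = 1`, `⟨p,A₂⟩ = 0`, `⟨A₃,A₃⟩ = 0`, `⟨A₂,A₃⟩ = 0`, `⟨p,A₃⟩ = −1`), setting
`Q = A₃×v`, the coadjoint action of `(Q,A)` carries the standard form
`(e₁, −C₂ e₃)` to `(p,v)`. -/
theorem cross_section_null_type (p v A₂ A₃ : Fin 3 → ℝ)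
    (hp : p ≠ 0) (hnull : lprod p p = 0)
    (hA₂ : lprod A₂ A₂ = 1) (hpA₂ : lprod p A₂ = 0)
    (hA₃ : lprod A₃ A₃ = 0) (hA₂A₃ : lprod A₂ A₃ = 0) (hpA₃ : lprod p A₃ = -1) :
    let C₂ : ℝ := lprod p v
    let A₁ : Fin 3 → ℝ := p
    let Q : Fin 3 → ℝ := lcross A₃ v
    let A : Matrix (Fin 3) (Fin 3) ℝ := Matrix.of fun i j => ![A₁, A₂, A₃] j i
    let m₁ : Fin 3 → ℝ := ![1, 0, 0]
    let m₂ : Fin 3 → ℝ := -C₂ • ![0, 0, 1]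
    A.mulVec m₁ = p ∧
    A.mulVec m₂ - lcross (A.mulVec m₁) Q = v := by
  intro C₂ A₁ Q A m₁ m₂
  have h₁ : A.mulVec m₁ = p := by
    ext i
    simp [A, m₁, A₁, Matrix.mulVec, dotProduct, Fin.sum_univ_three]
  have h₂ : A.mulVec m₂ = -C₂ • A₃ := by
    ext i
    simp [A, m₂, Matrix.mulVec, dotProduct, Fin.sum_univ_three, mul_comm]
  refine ⟨h₁, ?_⟩
  rw [h₁, h₂, lcross_lcross, hpA₃]
  module
end
end
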